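/- Any two projection games G and H satisfy ‖G ⊗ H‖ ≤ λ₊(G) · ‖H‖, where ‖·‖ denotes the collision value. -/

import Mathlib

open Finset

/-- A projection game: finite nonempty question sets `Q1` (Alice) and `Q2` (Bob),
a finite nonempty alphabet `A`, and a probability mass function `μ` on triples
`(u, v, π)` where `π : A → Option A` encodes a projection constraint
(the answer pair `(α, β)` satisfies `π` iff `π β = some α`). -/
structure ProjGame where
  Q1 : Type
  Q2 : Type
  A : Type
  [fQ1 : Fintype Q1]
  [fQ2 : Fintype Q2]
  [fA : Fintype A]
  [neQ1 : Nonempty Q1]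
  [neQ2 : Nonempty Q2]
  [neA : Nonempty A]
  [dQ1 : DecidableEq Q1]
  [dQ2 : DecidableEq Q2]
  [dA : DecidableEq A]
  μ : Q1 × Q2 × (A → Option A) → ℝ
  μ_nonneg : ∀ x, 0 ≤ μ x
  μ_sum : ∑ x, μ x = 1

attribute [instance] ProjGame.fQ1 ProjGame.fQ2 ProjGame.fA
  ProjGame.neQ1 ProjGame.neQ2 ProjGame.neA ProjGame.dQ1 ProjGame.dQ2 ProjGame.dA

namespace ProjGame

variable (G : ProjGame)

/-- The `U`-marginal (Alice-side marginal) of `μ`. -/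
noncomputable def wU (u : G.Q1) : ℝ := ∑ v, ∑ π, G.μ (u, v, π)

/-- The `V`-marginal (Bob-side marginal) of `μ`. -/
noncomputable def wV (v : G.Q2) : ℝ := ∑ u, ∑ π, G.μ (u, v, π)

/-- The game operator: `(Gf)(u,α) = E_{(v,π)|u} [∑_{β : π β = some α} f (v,β)]`. -/
noncomputable def op (f : G.Q2 × G.A → ℝ) : G.Q1 × G.A → ℝ :=
  fun p =>
    (∑ v, ∑ π, G.μ (p.1, v, π) * ∑ β, if π β = some p.2 then f (v, β) else 0) / G.wU p.1

/-- Squared norm on functions on `U × Σ`: `‖g‖² = E_u [∑_α g(u,α)²]`. -/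
noncomputable def normUsq (g : G.Q1 × G.A → ℝ) : ℝ := ∑ u, G.wU u * ∑ α, (g (u, α)) ^ 2

/-- Squared norm on functions on `V × Σ`: `‖f‖² = E_v [∑_β f(v,β)²]`. -/
noncomputable def normVsq (f : G.Q2 × G.A → ℝ) : ℝ := ∑ v, G.wV v * ∑ β, (f (v, β)) ^ 2

/-- Inner product `⟨g, g'⟩ = E_u [∑_α g(u,α) g'(u,α)]`. -/
noncomputable def inn (g g' : G.Q1 × G.A → ℝ) : ℝ :=
  ∑ u, G.wU u * ∑ α, g (u, α) * g' (u, α)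

/-- An assignment for Bob. -/
def IsBob (f : G.Q2 × G.A → ℝ) : Prop := (∀ p, 0 ≤ f p) ∧ ∀ v, ∑ β, f (v, β) = 1

/-- An assignment for Alice. -/
def IsAlice (g : G.Q1 × G.A → ℝ) : Prop := (∀ p, 0 ≤ g p) ∧ ∀ u, ∑ α, g (u, α) = 1

/-- The value of the game: `val(G) = max ⟨g, Gf⟩` over assignments. -/
noncomputable def val : ℝ :=
  sSup { x | ∃ f g, G.IsBob f ∧ G.IsAlice g ∧ x = G.inn g (G.op f) }

/-- The collision value `‖G‖ = max_f ‖Gf‖` over assignments `f` for Bob. -/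
noncomputable def collVal : ℝ :=
  sSup { x | ∃ f, G.IsBob f ∧ x = Real.sqrt (G.normUsq (G.op f)) }

/-- Product of projection constraints. -/
def tensorC {A A' : Type} (π : A → Option A) (π' : A' → Option A') :
    A × A' → Option (A × A') :=
  fun b => (π b.1).bind fun a => (π' b.2).map fun a' => (a, a')

/-- The product (parallel repetition) of two projection games. -/
noncomputable def tensor (G H : ProjGame) : ProjGame where
  Q1 := G.Q1 × H.Q1
  Q2 := G.Q2 × H.Q2
  A := G.A × H.A
  μ := fun x =>
    ∑ y : (G.Q1 × G.Q2 × (G.A → Option G.A)) × (H.Q1 × H.Q2 × (H.A → Option H.A)),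
      if ((y.1.1, y.2.1), (y.1.2.1, y.2.2.1), tensorC y.1.2.2 y.2.2.2) = x
      then G.μ y.1 * H.μ y.2 else 0
  μ_nonneg := by
    intro x
    refine Finset.sum_nonneg fun y _ => ?_
    split
    · exact mul_nonneg (G.μ_nonneg _) (H.μ_nonneg _)
    · exact le_refl 0
  μ_sum := by
    rw [Finset.sum_comm]
    simp only [Finset.sum_ite_eq, Finset.mem_univ, if_true]
    rw [Fintype.sum_prod_type]
    calc (∑ y1, ∑ y2, G.μ y1 * H.μ y2)
        = (∑ y1, G.μ y1) * (∑ y2, H.μ y2) := by rw [Finset.sum_mul_sum]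
      _ = 1 := by rw [G.μ_sum, H.μ_sum, mul_one]

/-- `G.iterTensor k` is the `(k+1)`-fold parallel repetition `G^{⊗(k+1)}`. -/
noncomputable def iterTensor (G : ProjGame) : ℕ → ProjGame
  | 0 => G
  | n + 1 => G.tensor (G.iterTensor n)

/-- `val₊(G)`: supremum of values of vector assignments. -/
noncomputable def valPlus (G : ProjGame) : ℝ :=
  sSup { x | ∃ n : ℕ, 0 < n ∧ ∃ f : G.Q2 × G.A → Fin n → ℝ,
    (∀ p i, 0 ≤ f p i) ∧
    (∀ v, Real.sqrt (∑ i, (∑ β, f (v, β) i) ^ 2) ≤ 1) ∧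
    x = Real.sqrt (∑ u, G.wU u * ∑ α, ∑ i, (G.op (fun q => f q i) (u, α)) ^ 2) }

/-- `‖Th‖² = E_v [(∑_β h(v,β))²]`. -/
noncomputable def Tnormsq (G : ProjGame) (h : G.Q2 × G.A → ℝ) : ℝ :=
  ∑ v, G.wV v * (∑ β, h (v, β)) ^ 2

/-- `λ₊(G)`: supremum of `‖Gh‖/‖Th‖` over nonnegative `h` with `‖Th‖ > 0`. -/
noncomputable def lambdaPlus (G : ProjGame) : ℝ :=
  sSup { x | ∃ h : G.Q2 × G.A → ℝ, (∀ p, 0 ≤ h p) ∧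
    0 < Real.sqrt (G.Tnormsq h) ∧
    x = Real.sqrt (G.normUsq (G.op h)) / Real.sqrt (G.Tnormsq h) }

/-- The symmetrized distribution on `V × V` (with the constraints marginalized out). -/
noncomputable def msym (G : ProjGame) (v v' : G.Q2) : ℝ :=
  ∑ u, ((∑ π, G.μ (u, v, π)) * (∑ π', G.μ (u, v', π'))) / G.wU u

/-- `G` is `γ`-expanding: the Markov operator of the symmetrized constraint graph has
spectral gap at least `γ`, i.e. `|⟨x, Ax⟩| ≤ (1-γ) E_v[x(v)²]` for mean-zero `x`. -/
def IsExpanding (G : ProjGame) (γ : ℝ) : Prop :=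
  ∀ x : G.Q2 → ℝ, (∑ v, G.wV v * x v) = 0 →
    |∑ v, ∑ v', G.msym v v' * x v * x v'| ≤ (1 - γ) * ∑ v, G.wV v * (x v) ^ 2

/-- The symmetrized distribution on `(v, v', π, π')`. -/
noncomputable def msymFull (G : ProjGame) (v v' : G.Q2) (π π' : G.A → Option G.A) : ℝ :=
  ∑ u, (G.μ (u, v, π) * G.μ (u, v', π')) / G.wU u

/-- The value of the assignment `x` in the symmetrized game `G_sym`. -/
noncomputable def symValAssign (G : ProjGame) (x : G.Q2 → G.A) : ℝ :=
  ∑ v, ∑ v', ∑ π, ∑ π', G.msymFull v v' π π' *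
    (if ∃ α, π (x v) = some α ∧ π' (x v') = some α then 1 else 0)

/-- The value of the symmetrized game `G_sym`. -/
noncomputable def symVal (G : ProjGame) : ℝ :=
  sSup { r | ∃ x : G.Q2 → G.A, r = G.symValAssign x }

end ProjGame

/-!
Up to regrouping questions and answers, the operator of `G ⊗ H` is `G` applied to the first
coordinates after `H` has been applied to the second ones. For a fixed question and answer of `H`,
the inner application leaves a nonnegative function on `V × Σ`, so applying `G` costs at most a
factor `λ₊(G)` and replaces it by its `T`-norm. Since `T` acts on the coordinates of `G` only, it
commutes with `H`, and summing Bob's strategy over his first answer gives, for each fixed `v`, an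
assignment for `H`; what remains is therefore at most `‖H‖`.
-/

namespace ProjGame

section FiniteSums

lemma sum_fiber_some_le {A B M : Type*} [Fintype A] [Fintype B] [DecidableEq B]
    [AddCommMonoid M] [PartialOrder M] [IsOrderedAddMonoid M] (π : A → Option B) {φ : A → M}
    (hφ : ∀ β, 0 ≤ φ β) : ∑ α, ∑ β with π β = some α, φ β ≤ ∑ β, φ β := by
  rw [← sum_fiberwise univ π φ, Fintype.sum_option]
  exact le_add_of_nonneg_left (sum_nonneg fun β _ => hφ β)

lemma sum_fiber_pushforward_mul {X A B R : Type*} [Fintype X] [Fintype B] [DecidableEq A]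
    [DecidableEq B] [NonUnitalNonAssocSemiring R] (g : X → A) (g' : X → B) (w : X → R) (a : A)
    (F : B → R) :
    ∑ b, (∑ x, if (g x, g' x) = (a, b) then w x else 0) * F b =
      ∑ x, if g x = a then w x * F (g' x) else 0 := by
  simp only [sum_mul, ite_mul, zero_mul]
  rw [sum_comm]
  simp [ite_and]

lemma sum_ite_fst_eq {X Y M : Type*} [Fintype X] [Fintype Y] [DecidableEq X] [AddCommMonoid M]
    (a : X) (φ : X × Y → M) : (∑ x, if x.1 = a then φ x else 0) = ∑ y, φ (a, y) := by
  simp [Fintype.sum_prod_type_right]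

lemma tensorC_eq_some_iff {A A' : Type} {π : A → Option A} {π' : A' → Option A'} {b : A × A'}
    {a : A} {a' : A'} : tensorC π π' b = some (a, a') ↔ π b.1 = some a ∧ π' b.2 = some a' := by
  cases h : π b.1 <;> cases h' : π' b.2 <;> simp [tensorC, h, h']

lemma sum_tensorC_eq_some {A A' : Type} {M : Type*} [Fintype A] [Fintype A'] [DecidableEq A]
    [DecidableEq A'] [AddCommMonoid M] (π : A → Option A) (π' : A' → Option A') (φ : A × A' → M)
    (a : A) (a' : A') :
    ∑ b with tensorC π π' b = some (a, a'), φ b =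
      ∑ β with π β = some a, ∑ β' with π' β' = some a', φ (β, β') := by
  rw [← sum_product']
  congr 1
  ext b
  simp [tensorC_eq_some_iff]

end FiniteSums

section ConditionalExpectation

variable (G H : ProjGame)

/-- The conditional expectation `E_{(v,π)|u} [F (v,π)]`. It is `0` at a question `u` of
probability zero. -/
noncomputable def condExp (u : G.Q1) (F : G.Q2 × (G.A → Option G.A) → ℝ) : ℝ :=
  (∑ x, G.μ (u, x) * F x) / G.wU u

lemma wU_eq_sum (u : G.Q1) : G.wU u = ∑ x, G.μ (u, x) :=
  (Fintype.sum_prod_type fun x => G.μ (u, x)).symm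

lemma wU_nonneg (u : G.Q1) : 0 ≤ G.wU u :=
  sum_nonneg fun _ _ => sum_nonneg fun _ _ => G.μ_nonneg _

lemma wV_nonneg (v : G.Q2) : 0 ≤ G.wV v :=
  sum_nonneg fun _ _ => sum_nonneg fun _ _ => G.μ_nonneg _

lemma sum_wV : ∑ v, G.wV v = 1 := by
  simp only [wV, ← G.μ_sum, Fintype.sum_prod_type]
  exact sum_comm

lemma condExp_sum {ι : Type*} (u : G.Q1) (s : Finset ι)
    (F : ι → G.Q2 × (G.A → Option G.A) → ℝ) :
    G.condExp u (fun x => ∑ i ∈ s, F i x) = ∑ i ∈ s, G.condExp u (F i) := by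
  simp only [condExp, mul_sum, ← sum_div]
  rw [sum_comm]

variable {G} in
lemma condExp_mono (u : G.Q1) {F F' : G.Q2 × (G.A → Option G.A) → ℝ} (h : ∀ x, F x ≤ F' x) :
    G.condExp u F ≤ G.condExp u F' :=
  div_le_div_of_nonneg_right
    (sum_le_sum fun x _ => mul_le_mul_of_nonneg_left (h x) (G.μ_nonneg _)) (G.wU_nonneg u)

variable {G} in
lemma condExp_nonneg (u : G.Q1) {F : G.Q2 × (G.A → Option G.A) → ℝ} (h : ∀ x, 0 ≤ F x) :
    0 ≤ G.condExp u F :=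
  div_nonneg (sum_nonneg fun x _ => mul_nonneg (G.μ_nonneg _) (h x)) (G.wU_nonneg u)

lemma sq_condExp_le_condExp_sq (u : G.Q1) (F : G.Q2 × (G.A → Option G.A) → ℝ) :
    G.condExp u F ^ 2 ≤ G.condExp u (fun x => F x ^ 2) := by
  rcases (G.wU_nonneg u).eq_or_lt with hu | hu
  · simp [condExp, ← hu]
  · have jensen := (even_two.convexOn_pow (𝕜 := ℝ)).map_centerMass_le
      (fun x _ => G.μ_nonneg (u, x)) (G.wU_eq_sum u ▸ hu) (fun x _ => Set.mem_univ (F x))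
    simpa [centerMass, condExp, ← wU_eq_sum, div_eq_inv_mul] using jensen

lemma wU_mul_condExp (u : G.Q1) (F : G.Q2 × (G.A → Option G.A) → ℝ) :
    G.wU u * G.condExp u F = ∑ x, G.μ (u, x) * F x := by
  refine mul_div_cancel_of_imp' fun hu => ?_
  have hμ : ∀ x ∈ univ, G.μ (u, x) = 0 :=
    (sum_eq_zero_iff_of_nonneg fun _ _ => G.μ_nonneg _).1 (G.wU_eq_sum u ▸ hu)
  exact sum_eq_zero fun x hx => by rw [hμ x hx, zero_mul]

lemma sum_wU_mul_condExp_fst (F : G.Q2 → ℝ) :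
    ∑ u, G.wU u * G.condExp u (fun x => F x.1) = ∑ v, G.wV v * F v := by
  simp only [wU_mul_condExp, Fintype.sum_prod_type, wV, sum_mul]
  exact sum_comm

end ConditionalExpectation

section Operator

variable (G : ProjGame)

lemma op_apply (f : G.Q2 × G.A → ℝ) (u : G.Q1) (α : G.A) :
    G.op f (u, α) = G.condExp u fun x => ∑ β with x.2 β = some α, f (x.1, β) := by
  simp only [op, condExp, Fintype.sum_prod_type, sum_filter]

lemma op_sum {ι : Type*} (s : Finset ι) (f : ι → G.Q2 × G.A → ℝ) (p : G.Q1 × G.A) :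
    G.op (fun q => ∑ i ∈ s, f i q) p = ∑ i ∈ s, G.op (f i) p := by
  obtain ⟨u, α⟩ := p
  simp only [op_apply, ← condExp_sum]
  congr! 2 with x
  exact sum_comm

variable {G}

lemma op_nonneg {f : G.Q2 × G.A → ℝ} (hf : ∀ p, 0 ≤ f p) (p : G.Q1 × G.A) : 0 ≤ G.op f p := by
  rw [← Prod.mk.eta (p := p), op_apply]
  exact condExp_nonneg _ fun _ => sum_nonneg fun _ _ => hf _

lemma sum_op_le {f : G.Q2 × G.A → ℝ} (hf : ∀ p, 0 ≤ f p) (u : G.Q1) :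
    ∑ α, G.op f (u, α) ≤ G.condExp u fun x => ∑ β, f (x.1, β) := by
  simp only [op_apply, ← condExp_sum]
  exact condExp_mono u fun x => sum_fiber_some_le x.2 fun β => hf (x.1, β)

lemma normUsq_op_le_Tnormsq {f : G.Q2 × G.A → ℝ} (hf : ∀ p, 0 ≤ f p) :
    G.normUsq (G.op f) ≤ G.Tnormsq f := by
  have pointwise (u : G.Q1) :
      ∑ α, G.op f (u, α) ^ 2 ≤ G.condExp u fun x => (∑ β, f (x.1, β)) ^ 2 :=
    calc ∑ α, G.op f (u, α) ^ 2
        ≤ (∑ α, G.op f (u, α)) ^ 2 := sum_sq_le_sq_sum_of_nonneg fun α _ => op_nonneg hf _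
      _ ≤ (G.condExp u fun x => ∑ β, f (x.1, β)) ^ 2 :=
        pow_le_pow_left₀ (sum_nonneg fun α _ => op_nonneg hf _) (sum_op_le hf u) 2
      _ ≤ _ := G.sq_condExp_le_condExp_sq u _
  calc G.normUsq (G.op f)
      ≤ ∑ u, G.wU u * G.condExp u fun x => (∑ β, f (x.1, β)) ^ 2 :=
        sum_le_sum fun u _ => mul_le_mul_of_nonneg_left (pointwise u) (G.wU_nonneg u)
    _ = G.Tnormsq f := G.sum_wU_mul_condExp_fst fun v => (∑ β, f (v, β)) ^ 2

end Operator

section Values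

variable (G : ProjGame)

lemma collVal_nonneg : 0 ≤ G.collVal :=
  Real.sSup_nonneg (by rintro _ ⟨f, -, rfl⟩; positivity)

lemma lambdaPlus_nonneg : 0 ≤ G.lambdaPlus :=
  Real.sSup_nonneg (by rintro _ ⟨h, -, -, rfl⟩; positivity)

variable {G}

lemma Tnormsq_nonneg (h : G.Q2 × G.A → ℝ) : 0 ≤ G.Tnormsq h :=
  sum_nonneg fun v _ => mul_nonneg (G.wV_nonneg v) (sq_nonneg _)

lemma IsBob.Tnormsq_eq_one {f : G.Q2 × G.A → ℝ} (hf : G.IsBob f) : G.Tnormsq f = 1 := by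
  simp [Tnormsq, hf.2, sum_wV]

lemma IsBob.normUsq_op_le {f : G.Q2 × G.A → ℝ} (hf : G.IsBob f) :
    G.normUsq (G.op f) ≤ G.collVal ^ 2 := by
  refine (Real.sqrt_le_left G.collVal_nonneg).1 (le_csSup ⟨1, ?_⟩ ⟨f, hf, rfl⟩)
  rintro _ ⟨f', hf', rfl⟩
  rw [Real.sqrt_le_one]
  exact (normUsq_op_le_Tnormsq hf'.1).trans hf'.Tnormsq_eq_one.le

lemma normUsq_op_le_lambdaPlus {h : G.Q2 × G.A → ℝ} (hh : ∀ p, 0 ≤ h p) :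
    G.normUsq (G.op h) ≤ G.lambdaPlus ^ 2 * G.Tnormsq h := by
  rcases (Tnormsq_nonneg h).eq_or_lt with hT | hT
  · simpa [← hT] using normUsq_op_le_Tnormsq hh
  have ratio_le : √(G.normUsq (G.op h)) / √(G.Tnormsq h) ≤ G.lambdaPlus := by
    refine le_csSup ⟨1, ?_⟩ ⟨h, hh, Real.sqrt_pos.2 hT, rfl⟩
    rintro _ ⟨h', hh', hT', rfl⟩
    exact (div_le_one hT').2 (Real.sqrt_le_sqrt (normUsq_op_le_Tnormsq hh'))
  rwa [← Real.sqrt_div' _ hT.le, Real.sqrt_le_left G.lambdaPlus_nonneg, div_le_iff₀ hT] at ratio_le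

end Values

section Tensor

variable {G H : ProjGame}

-- `rw` and `simp` do not see through `(G.tensor H).Q1` to `G.Q1 × H.Q1` (likewise `Q2`, `A`), so
-- below the product types are spelled out and statements about `G.tensor H` are applied as terms.
lemma sum_tensor_μ_mul (u : G.Q1) (u' : H.Q1)
    (F : (G.Q2 × H.Q2) × (G.A × H.A → Option (G.A × H.A)) → ℝ) :
    ∑ x, (G.tensor H).μ ((u, u'), x) * F x =
      ∑ y, ∑ y', G.μ (u, y) * H.μ (u', y') * F ((y.1, y'.1), tensorC y.2 y'.2) :=
  calc ∑ x, (G.tensor H).μ ((u, u'), x) * F x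
      = ∑ z : (G.Q1 × G.Q2 × (G.A → Option G.A)) × (H.Q1 × H.Q2 × (H.A → Option H.A)),
          if (z.1.1, z.2.1) = (u, u')
          then G.μ z.1 * H.μ z.2 * F ((z.1.2.1, z.2.2.1), tensorC z.1.2.2 z.2.2.2) else 0 :=
        sum_fiber_pushforward_mul _ _ _ _ _
    _ = ∑ y, if y.1 = u then ∑ y', if y'.1 = u'
          then G.μ y * H.μ y' * F ((y.2.1, y'.2.1), tensorC y.2.2 y'.2.2) else 0 else 0 := by
        rw [Fintype.sum_prod_type]
        simp only [Prod.mk.injEq, ite_and, sum_ite_irrel, sum_const_zero]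
    _ = ∑ y, ∑ y', G.μ (u, y) * H.μ (u', y') * F ((y.1, y'.1), tensorC y.2 y'.2) := by
        simp only [sum_ite_fst_eq]

lemma wU_tensor (u : G.Q1) (u' : H.Q1) : (G.tensor H).wU (u, u') = G.wU u * H.wU u' :=
  calc (G.tensor H).wU (u, u')
      = ∑ x : (G.Q2 × H.Q2) × (G.A × H.A → Option (G.A × H.A)),
          (G.tensor H).μ ((u, u'), x) * 1 := by
        simp only [mul_one]
        exact (G.tensor H).wU_eq_sum (u, u')
    _ = ∑ y, ∑ y', G.μ (u, y) * H.μ (u', y') * 1 := sum_tensor_μ_mul u u' _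
    _ = G.wU u * H.wU u' := by simp only [mul_one, wU_eq_sum, sum_mul_sum]

lemma condExp_tensor (u : G.Q1) (u' : H.Q1)
    (F : (G.Q2 × H.Q2) × (G.A × H.A → Option (G.A × H.A)) → ℝ) :
    (G.tensor H).condExp (u, u') F =
      G.condExp u fun y => H.condExp u' fun y' => F ((y.1, y'.1), tensorC y.2 y'.2) :=
  calc (G.tensor H).condExp (u, u') F
      = (∑ y, ∑ y', G.μ (u, y) * H.μ (u', y') * F ((y.1, y'.1), tensorC y.2 y'.2)) /
          (G.wU u * H.wU u') :=
        congrArg₂ (· / ·) (sum_tensor_μ_mul u u' F) (wU_tensor u u')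
    _ = G.condExp u fun y => H.condExp u' fun y' => F ((y.1, y'.1), tensorC y.2 y'.2) := by
        rw [mul_comm (G.wU u), ← div_div]
        simp only [condExp, mul_div_assoc', ← sum_div, mul_sum, mul_assoc]

/-- A function on `(V × V') × (Σ × Σ')`, regarded as a family of functions on `V' × Σ'` indexed by
`V × Σ`; in this form the operators of `G` and `H` can be applied one after the other. -/
def tensorCurry {V V' A A' R : Type*} (f : (V × V') × (A × A') → R) (p : V × A) : V' × A' → R :=
  fun q => f ((p.1, q.1), (p.2, q.2))

lemma op_tensor (f : (G.Q2 × H.Q2) × (G.A × H.A) → ℝ) (u : G.Q1) (u' : H.Q1)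
    (α : G.A) (α' : H.A) :
    (G.tensor H).op f ((u, u'), (α, α')) =
      G.op (fun p => H.op (tensorCurry f p) (u', α')) (u, α) :=
  calc (G.tensor H).op f ((u, u'), (α, α'))
      = (G.tensor H).condExp (u, u') fun x : (G.Q2 × H.Q2) × (G.A × H.A → Option (G.A × H.A)) =>
          ∑ b with x.2 b = some (α, α'), f (x.1, b) :=
        op_apply (G.tensor H) f (u, u') (α, α')
    _ = G.condExp u fun y => H.condExp u' fun y' =>
          ∑ b with tensorC y.2 y'.2 b = some (α, α'), f ((y.1, y'.1), b) :=
        condExp_tensor u u' _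
    _ = G.op (fun p => H.op (tensorCurry f p) (u', α')) (u, α) := by
        simp only [op_apply, ← condExp_sum, sum_tensorC_eq_some, tensorCurry]

lemma normUsq_op_tensor (f : (G.Q2 × H.Q2) × (G.A × H.A) → ℝ) :
    (G.tensor H).normUsq ((G.tensor H).op f) =
      ∑ u', H.wU u' * ∑ α', G.normUsq (G.op fun p => H.op (tensorCurry f p) (u', α')) :=
  calc (G.tensor H).normUsq ((G.tensor H).op f)
      = ∑ U : G.Q1 × H.Q1, G.wU U.1 * H.wU U.2 * ∑ a : G.A × H.A,
          G.op (fun p => H.op (tensorCurry f p) (U.2, a.2)) (U.1, a.1) ^ 2 :=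
        Fintype.sum_congr _ _ fun U => congrArg₂ (· * ·) (wU_tensor U.1 U.2) <|
          Fintype.sum_congr _ _ fun a => congrArg (· ^ 2) (op_tensor f U.1 U.2 a.1 a.2)
    _ = ∑ u', H.wU u' * ∑ α', G.normUsq (G.op fun p => H.op (tensorCurry f p) (u', α')) := by
        simp only [Fintype.sum_prod_type_right, normUsq, mul_sum]
        congr! 1 with u'
        rw [sum_comm]
        congr! 3
        ring

lemma sum_Tnormsq_op (F : G.Q2 × G.A → H.Q2 × H.A → ℝ) :
    ∑ u', H.wU u' * ∑ α', G.Tnormsq (fun p => H.op (F p) (u', α')) =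
      ∑ v, G.wV v * H.normUsq (H.op fun q => ∑ β, F (v, β) q) := by
  simp only [Tnormsq, normUsq, op_sum, mul_sum]
  rw [sum_comm_cycle]
  congr! 3
  ring

lemma IsBob.sum_tensorCurry {f : (G.Q2 × H.Q2) × (G.A × H.A) → ℝ}
    (hf : (G.tensor H).IsBob f) (v : G.Q2) :
    H.IsBob fun q => ∑ β, tensorCurry f (v, β) q := by
  refine ⟨fun _ => sum_nonneg fun _ _ => hf.1 _, fun v' => ?_⟩
  rw [← hf.2 (v, v')]
  exact (Fintype.sum_prod_type_right fun b : G.A × H.A => f ((v, v'), b)).symm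

lemma IsBob.normUsq_op_tensor_le {f : (G.Q2 × H.Q2) × (G.A × H.A) → ℝ}
    (hf : (G.tensor H).IsBob f) :
    (G.tensor H).normUsq ((G.tensor H).op f) ≤ (G.lambdaPlus * H.collVal) ^ 2 :=
  calc (G.tensor H).normUsq ((G.tensor H).op f)
      = ∑ u', H.wU u' * ∑ α', G.normUsq (G.op fun p => H.op (tensorCurry f p) (u', α')) :=
        normUsq_op_tensor f
    _ ≤ ∑ u', H.wU u' * ∑ α',
          G.lambdaPlus ^ 2 * G.Tnormsq (fun p => H.op (tensorCurry f p) (u', α')) := by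
        gcongr with u' _ α'
        · exact H.wU_nonneg u'
        · exact normUsq_op_le_lambdaPlus fun p => op_nonneg (fun _ => hf.1 _) _
    _ = G.lambdaPlus ^ 2 * ∑ v, G.wV v * H.normUsq (H.op fun q => ∑ β, tensorCurry f (v, β) q) := by
        simp only [← sum_Tnormsq_op, mul_sum, mul_left_comm]
    _ ≤ G.lambdaPlus ^ 2 * ∑ v, G.wV v * H.collVal ^ 2 := by
        gcongr with v
        · exact G.wV_nonneg v
        · exact (hf.sum_tensorCurry v).normUsq_op_le
    _ = (G.lambdaPlus * H.collVal) ^ 2 := by rw [← sum_mul, sum_wV, one_mul, mul_pow]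

end Tensor

end ProjGame

/-- Any two projection games satisfy `‖G ⊗ H‖ ≤ λ₊(G) · ‖H‖`. -/
theorem collVal_tensor_le_lambdaPlus (G H : ProjGame) :
    (G.tensor H).collVal ≤ G.lambdaPlus * H.collVal := by
  have rhs_nonneg := mul_nonneg G.lambdaPlus_nonneg H.collVal_nonneg
  refine Real.sSup_le ?_ rhs_nonneg
  rintro _ ⟨f, hf, rfl⟩
  exact (Real.sqrt_le_left rhs_nonneg).2 hf.normUsq_op_tensor_le
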